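/- Let P₁, P₂ be symmetric positive definite N×N matrices, and for a symmetric matrix P define its Stieltjes transform S_P(ω) := (1/N) tr((P − ωI)⁻¹), which is strictly increasing on (−∞, 0); let S_P⁻¹ denote the inverse of this restriction, and define the R-transform R_P(ω) := S_P⁻¹(−ω) − 1/ω wherever −ω lies in the range of S_P on (−∞, 0]. Let γ₁, γ₂ > 0 be scalars with η := γ₁ + γ₂, and suppose S_{Pᵢ}(−γᵢ) = 1/η for i = 1, 2 (the GEC fixed-point conditions under uniform diagonalization). Suppose further that P₁ and P₂ are free at ω = −1/η, i.e., R_{P₁+P₂}(−1/η) = R_{P₁}(−1/η) + R_{P₂}(−1/η), with all terms well defined where S_{P₁+P₂}⁻¹ is the inverse of S_{P₁+P₂} restricted to (−∞, λ_min(P₁+P₂)). Then S_{P₁+P₂}⁻¹(1/η) = 0, and consequently 1/η = (1/N) tr((P₁ + P₂)⁻¹). -/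

import Mathlib

open Matrix

/-- The Stieltjes transform `S_P(ω) = (1/N) tr((P − ωI)⁻¹)` of a symmetric matrix. -/
noncomputable def stieltjesTransform {N : ℕ} (P : Matrix (Fin N) (Fin N) ℝ) (ω : ℝ) : ℝ :=
  (N : ℝ)⁻¹ * ((P - ω • (1 : Matrix (Fin N) (Fin N) ℝ))⁻¹).trace

/-- The R-transform `R_P(ω) = S_P⁻¹(−ω) − 1/ω`, expressed in terms of a
(functional) inverse `Sinv` of the Stieltjes transform. -/
noncomputable def rTransform (Sinv : ℝ → ℝ) (ω : ℝ) : ℝ :=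
  Sinv (-ω) - 1 / ω

/-- **GEC second-order fixed point under freeness (Theorem 2(b)).**
Let `P₁, P₂` be symmetric positive definite, `γ₁, γ₂ > 0` scalars with
`η = γ₁ + γ₂`, and suppose the GEC fixed-point conditions
`S_{Pᵢ}(−γᵢ) = 1/η` hold.  Let `Sinv₁, Sinv₂` invert the Stieltjes transforms
of `P₁, P₂` on `(−∞,0)` and `Sinv₁₂` invert that of `P₁ + P₂` on
`(−∞, λ_min(P₁+P₂))` (the condition `ω < λ_min` is encoded as positive
definiteness of `P₁ + P₂ − ωI`), with `1/η` in the range of the latter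
restriction (well-definedness).  If `P₁` and `P₂` are free at `ω = −1/η`,
i.e. `R_{P₁+P₂}(−1/η) = R_{P₁}(−1/η) + R_{P₂}(−1/η)`, then
`S_{P₁+P₂}⁻¹(1/η) = 0` and consequently `1/η = (1/N) tr((P₁+P₂)⁻¹)`. -/
theorem gec_map_curvature_free
    (N : ℕ) (hN : 0 < N)
    (P₁ P₂ : Matrix (Fin N) (Fin N) ℝ)
    (hP₁ : P₁.PosDef) (hP₂ : P₂.PosDef)
    (γ₁ γ₂ η : ℝ) (hγ₁ : 0 < γ₁) (hγ₂ : 0 < γ₂) (hη : η = γ₁ + γ₂)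
    (Sinv₁ Sinv₂ Sinv₁₂ : ℝ → ℝ)
    (hinv₁ : ∀ ω < 0, Sinv₁ (stieltjesTransform P₁ ω) = ω)
    (hinv₂ : ∀ ω < 0, Sinv₂ (stieltjesTransform P₂ ω) = ω)
    (hinv₁₂ : ∀ ω : ℝ, ((P₁ + P₂) - ω • (1 : Matrix (Fin N) (Fin N) ℝ)).PosDef →
      Sinv₁₂ (stieltjesTransform (P₁ + P₂) ω) = ω)
    (hrange : ∃ ω : ℝ, ((P₁ + P₂) - ω • (1 : Matrix (Fin N) (Fin N) ℝ)).PosDef ∧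
      stieltjesTransform (P₁ + P₂) ω = η⁻¹)
    (hfix₁ : stieltjesTransform P₁ (-γ₁) = η⁻¹)
    (hfix₂ : stieltjesTransform P₂ (-γ₂) = η⁻¹)
    (hfree : rTransform Sinv₁₂ (-η⁻¹) = rTransform Sinv₁ (-η⁻¹) + rTransform Sinv₂ (-η⁻¹)) :
    Sinv₁₂ η⁻¹ = 0 ∧ η⁻¹ = (N : ℝ)⁻¹ * (((P₁ + P₂)⁻¹ : Matrix (Fin N) (Fin N) ℝ)).trace := by
  -- The fixed-point conditions say that `-γᵢ` is the value of `Sinvᵢ` at `η⁻¹`.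
  have h₁ : Sinv₁ η⁻¹ = -γ₁ := by rw [← hfix₁]; exact hinv₁ _ (by linarith)
  have h₂ : Sinv₂ η⁻¹ = -γ₂ := by rw [← hfix₂]; exact hinv₂ _ (by linarith)
  -- Freeness at `-η⁻¹` then reads `Sinv₁₂ η⁻¹ + η = (-γ₁ + η) + (-γ₂ + η)`.
  have h₁₂ : Sinv₁₂ η⁻¹ = 0 := by
    simp only [rTransform, neg_neg, one_div, inv_neg, inv_inv, h₁, h₂] at hfree
    linarith
  -- The point at which `S_{P₁+P₂}` takes the value `η⁻¹` is therefore `0`.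
  obtain ⟨ω, hω, hS⟩ := hrange
  have hω₀ : ω = 0 := by rw [← hinv₁₂ ω hω, hS, h₁₂]
  refine ⟨h₁₂, ?_⟩
  rw [← hS, hω₀, stieltjesTransform, zero_smul, sub_zero]
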